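/- Let χ be a non-principal Dirichlet character modulo a prime p ≥ 10^7, and let q_1 < q_2 be the two smallest prime non-residues of χ. If q_1 > e²·log p, then q_2 < 11.0421·p^{1/4}·log p. -/

import Mathlib

/-!
Let `ℓ` be a prime divisor of the order of `χ` and `p - 1 = w * ℓ`; then `χ u = 1` implies
`u ^ w = 1`. A small `N` which is prime to `q₁` has all its prime factors below `q₂`, so `χ N = 1`.
Hence, if `q` and `n` are small and `z = n / q`, and `q₁` divides none of the numerators of the
fractions `z`, `z + 1`, …, `z + (k - 1)`, then all the `z + m` with `m < k` have a common `w`-th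
power.

Such `z` are rare. For every `e : Fin k → ℤ/ℓ` with sum zero they satisfy
`∏ m, (z + m) ^ (w * e m) = 1`, and Stepanov's method bounds the number of solutions of this
equation if `e ≠ 0`. A `z` of the required kind solves it for all `e`, and every other `z` outside
the zeros of the factors still solves it for at least a proportion `1 / ℓ` of the `e`. Averaging
over `e` therefore leaves at most `5 * k * √p` of the former. On the other hand, since
`q₁ > e² log p`, the condition on `q₁` removes few pairs `(q, n)`, and if
`q₂ ≥ 11.0421 * p ^ (1/4) * log p` there is room for more than `5 * k * √p` coprime pairs, which
give distinct `z`.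
-/

section PolynomialMethod

open Polynomial

theorem pow_X_sub_C_dvd_of_isRoot_iterate_derivative {K : Type*} [Field K] {f : K[X]} {z : K}
    {M : ℕ} (hM : ((M - 1).factorial : K) ≠ 0) (hf : ∀ i < M, (derivative^[i] f).IsRoot z) :
    (X - C z) ^ M ∣ f := by
  rcases eq_or_ne f 0 with rfl | hf0
  · exact dvd_zero _
  rcases M with _ | n
  · simp
  · exact (le_rootMultiplicity_iff hf0).1 <|
      lt_rootMultiplicity_of_isRoot_iterate_derivative_of_mem_nonZeroDivisors hf0
        (fun i hi => hf i (Nat.lt_succ_of_le hi)) (mem_nonZeroDivisors_of_ne_zero hM)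

theorem card_mul_le_natDegree_of_pow_X_sub_C_dvd {K : Type*} [Field K] {f : K[X]} (hf : f ≠ 0)
    {M : ℕ} {S : Finset K} (hS : ∀ z ∈ S, (X - C z) ^ M ∣ f) : S.card * M ≤ f.natDegree := by
  have hprod : ∏ z ∈ S, (X - C z) ^ M ∣ f :=
    Finset.prod_dvd_of_coprime
      (fun _ _ _ _ hne => (pairwise_coprime_X_sub_C Function.injective_id hne).pow) hS
  have hdeg := natDegree_le_of_dvd hprod hf
  rw [natDegree_prod_of_monic _ _ fun z _ => (monic_X_sub_C z).pow M] at hdeg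
  simpa only [natDegree_pow, natDegree_X_sub_C, mul_one, Finset.sum_const, smul_eq_mul] using hdeg

theorem exists_ne_zero_degree_lt_forall_map_eq_zero {K ι : Type*} [Field K] [Fintype ι]
    {w M B : ℕ} (Φ : Fin M → (ι → K[X]) →ₗ[K] K[X])
    (hΦ : ∀ i (a : ι → K[X]), (∀ x, (a x).degree < w) → (Φ i a).degree < B)
    (hcard : M * B < w * Fintype.card ι) :
    ∃ a : ι → K[X], a ≠ 0 ∧ (∀ x, (a x).degree < w) ∧ ∀ i, Φ i a = 0 := by
  have finrank_degreeLT (n : ℕ) : Module.finrank K (degreeLT K n) = n := by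
    rw [(degreeLTEquiv K n).finrank_eq, Module.finrank_fin_fun]
  have (n : ℕ) : FiniteDimensional K (degreeLT K n) := (degreeLTEquiv K n).symm.finiteDimensional
  let incl : (ι → degreeLT K w) →ₗ[K] (ι → K[X]) :=
    LinearMap.pi fun x => (degreeLT K w).subtype ∘ₗ LinearMap.proj x
  have degree_incl (v : ι → degreeLT K w) (x : ι) : (incl v x).degree < w :=
    mem_degreeLT.1 (v x).2
  let Ψ : (ι → degreeLT K w) →ₗ[K] (Fin M → degreeLT K B) :=
    LinearMap.pi fun i => (Φ i ∘ₗ incl).codRestrict (degreeLT K B) fun v =>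
      mem_degreeLT.2 (hΦ i _ (degree_incl v))
  have hker : LinearMap.ker Ψ ≠ ⊥ := by
    apply LinearMap.ker_ne_bot_of_finrank_lt
    simpa [Module.finrank_pi_fintype, finrank_degreeLT, mul_comm w] using hcard
  obtain ⟨v, hv, hv0⟩ := Submodule.exists_mem_ne_zero_of_ne_bot hker
  refine ⟨incl v, fun h => hv0 ?_, degree_incl v, fun i => ?_⟩
  · exact funext fun x => Subtype.ext (congrFun h x)
  · exact congrArg Subtype.val (congrFun (LinearMap.mem_ker.1 hv) i)

theorem eq_zero_of_sum_pow_mul_eq_zero {R ι : Type*} [CommRing R] [IsDomain R] [Fintype ι]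
    {y : R} (hy : y ≠ 0) {w : ℕ} {N : ι → ℕ} {h : ι → R}
    (hN : ∀ i j, i ≠ j → N i + w ≤ N j ∨ N j + w ≤ N i) (hndvd : ∀ i, h i ≠ 0 → ¬ y ^ w ∣ h i)
    (hsum : ∑ i, y ^ N i * h i = 0) (i : ι) : h i = 0 := by
  classical
  by_contra hi
  obtain ⟨j, hj, hmin⟩ := Finset.exists_min_image (Finset.univ.filter fun i => h i ≠ 0) N
    ⟨i, by simpa using hi⟩
  simp only [Finset.mem_filter, Finset.mem_univ, true_and] at hj hmin
  have hdvd : y ^ (N j + w) ∣ y ^ N j * h j := by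
    rw [← Finset.add_sum_erase _ _ (Finset.mem_univ j)] at hsum
    rw [eq_neg_of_add_eq_zero_left hsum, dvd_neg]
    refine Finset.dvd_sum fun i hi => ?_
    rcases eq_or_ne (h i) 0 with h0 | h0
    · simp [h0]
    · have := hmin i h0
      have := hN i j (Finset.ne_of_mem_erase hi)
      exact (pow_dvd_pow y (by omega)).mul_right _
  rw [pow_add] at hdvd
  exact hndvd j hj ((mul_dvd_mul_iff_left (pow_ne_zero _ hy)).1 hdvd)

/-- The monic polynomial `∏ m, (X - b m) ^ n m` with prescribed roots `b` and multiplicities `n`.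
In particular `rootsPoly b 1` is the squarefree polynomial with roots `b` when `b` is injective. -/
noncomputable def rootsPoly {R ι : Type*} [CommRing R] [Fintype ι] (b : ι → R) (n : ι → ℕ) : R[X] :=
  ∏ m, (X - C (b m)) ^ n m

/-- The numerator of the logarithmic derivative of `rootsPoly b n` over the common denominator
`rootsPoly b 1`. -/
noncomputable def logDerivNumerator {R ι : Type*} [CommRing R] [Fintype ι] [DecidableEq ι]
    (b : ι → R) (n : ι → ℕ) : R[X] :=
  ∑ m, C (n m : R) * ∏ i ∈ Finset.univ.erase m, (X - C (b i))

/-- The operator which sends `a` to the polynomial `aᵢ` such that `Pⁱ (a g)⁽ⁱ⁾ = aᵢ g`, for `g` a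
solution of `P g' = g Q`. -/
noncomputable def twistedDerivative {R : Type*} [CommRing R] (P Q : R[X]) : ℕ → R[X] →ₗ[R] R[X]
  | 0 => LinearMap.id
  | i + 1 => (LinearMap.mulLeft R P ∘ₗ derivative +
      LinearMap.mulLeft R (Q - C (i : R) * derivative P)) ∘ₗ twistedDerivative P Q i

section CommRing

variable {R ι : Type*} [CommRing R] [Fintype ι]

theorem natDegree_rootsPoly [Nontrivial R] (b : ι → R) (n : ι → ℕ) :
    (rootsPoly b n).natDegree = ∑ m, n m := by
  rw [rootsPoly, natDegree_prod_of_monic _ _ fun m _ => (monic_X_sub_C (b m)).pow (n m)]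
  exact Finset.sum_congr rfl fun m _ => by
    rw [(monic_X_sub_C (b m)).natDegree_pow, natDegree_X_sub_C, mul_one]

theorem eval_rootsPoly (b : ι → R) (n : ι → ℕ) (z : R) :
    (rootsPoly b n).eval z = ∏ m, (z - b m) ^ n m := by
  simp only [rootsPoly, eval_prod, eval_pow, eval_sub, eval_X, eval_C]

theorem natDegree_logDerivNumerator_le [Nontrivial R] [DecidableEq ι] (b : ι → R) (n : ι → ℕ) :
    (logDerivNumerator b n).natDegree ≤ Fintype.card ι := by
  refine natDegree_sum_le_of_forall_le _ _ fun m _ => (natDegree_C_mul_le _ _).trans ?_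
  rw [natDegree_prod_of_monic _ _ fun i _ => monic_X_sub_C (b i)]
  simp

theorem rootsPoly_one_mul_derivative [DecidableEq ι] (b : ι → R) (n : ι → ℕ) :
    rootsPoly b 1 * derivative (rootsPoly b n) = rootsPoly b n * logDerivNumerator b n := by
  rw [rootsPoly, rootsPoly, logDerivNumerator, derivative_prod_finset, Finset.mul_sum,
    Finset.mul_sum]
  refine Finset.sum_congr rfl fun m _ => ?_
  have hpow : (X - C (b m)) * derivative ((X - C (b m)) ^ n m)
      = C (n m : R) * (X - C (b m)) ^ n m := by
    rw [derivative_X_sub_C_pow]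
    rcases n m with _ | r
    · simp
    · rw [Nat.add_sub_cancel, pow_succ']; ring
  rw [← Finset.mul_prod_erase _ _ (Finset.mem_univ m), ← Finset.mul_prod_erase
    Finset.univ (fun i => (X - C (b i)) ^ n i) (Finset.mem_univ m)]
  simp only [Pi.one_apply, pow_one]
  linear_combination (∏ i ∈ Finset.univ.erase m, (X - C (b i))) *
    (∏ i ∈ Finset.univ.erase m, (X - C (b i)) ^ n i) * hpow

theorem twistedDerivative_succ_apply (P Q a : R[X]) (i : ℕ) :
    twistedDerivative P Q (i + 1) a = P * derivative (twistedDerivative P Q i a) +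
      (Q - C (i : R) * derivative P) * twistedDerivative P Q i a := rfl

theorem natDegree_twistedDerivative_le {P Q : R[X]} {k : ℕ} (hP : P.natDegree ≤ k)
    (hQ : Q.natDegree ≤ k) (i : ℕ) (a : R[X]) :
    (twistedDerivative P Q i a).natDegree ≤ a.natDegree + i * k := by
  induction i with
  | zero => simp [twistedDerivative]
  | succ i ih =>
    have hderiv := natDegree_derivative_le (twistedDerivative P Q i a)
    have hcoeff : (Q - C (i : R) * derivative P).natDegree ≤ k :=
      (natDegree_sub_le _ _).trans <| max_le hQ <| (natDegree_C_mul_le _ _).trans <|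
        (natDegree_derivative_le P).trans (by omega)
    rw [twistedDerivative_succ_apply, Nat.succ_mul]
    exact (natDegree_add_le _ _).trans <|
      max_le (natDegree_mul_le.trans (by omega)) (natDegree_mul_le.trans (by omega))

theorem pow_mul_iterate_derivative_mul {P Q g u : R[X]} (hg : P * derivative g = g * Q)
    (hu : derivative u = 0) (i : ℕ) (a : R[X]) :
    P ^ i * derivative^[i] (a * g * u) = twistedDerivative P Q i a * g * u := by
  induction i with
  | zero => simp [twistedDerivative]
  | succ i ih =>
    have hderiv := congrArg derivative ih
    simp only [derivative_mul, hu, mul_zero, add_zero] at hderiv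
    have hPpow : P * derivative (P ^ i) = C (i : R) * derivative P * P ^ i := by
      rcases i with _ | r
      · simp
      · rw [derivative_pow, Nat.add_sub_cancel, pow_succ']; ring
    rw [twistedDerivative_succ_apply, Function.iterate_succ_apply']
    linear_combination P * hderiv - derivative^[i] (a * g * u) * hPpow -
      C (i : R) * derivative P * ih + twistedDerivative P Q i a * u * hg

end CommRing

section RootsOfUnity

variable {M ι : Type*} [CommMonoid M] [Fintype ι] {ℓ : ℕ} [NeZero ℓ] {v : ι → M}

/-- The additive character `e ↦ ∏ m, v m ^ e m` of `(ℤ/ℓ)^ι` attached to a family `v` of `ℓ`-th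
roots of unity. -/
noncomputable def prodZModChar (hv : ∀ m, v m ^ ℓ = 1) : AddChar (ι → ZMod ℓ) M :=
  ∏ m, (AddChar.zmodChar ℓ (hv m)).compAddMonoidHom (Pi.evalAddMonoidHom _ m)

theorem prodZModChar_apply (hv : ∀ m, v m ^ ℓ = 1) (e : ι → ZMod ℓ) :
    prodZModChar hv e = ∏ m, v m ^ (e m).val := by
  simp only [prodZModChar, AddChar.prod_apply, AddChar.compAddMonoidHom_apply,
    Pi.evalAddMonoidHom_apply, AddChar.zmodChar_apply]

theorem prod_pow_mul_val_eq_one (hv : ∀ m, v m ^ ℓ = 1) {e : ι → ZMod ℓ}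
    (he : ∏ m, v m ^ (e m).val = 1) (c : ZMod ℓ) : ∏ m, v m ^ (c * e m).val = 1 := by
  have hsmul : (fun m => c * e m) = c.val • e := by
    ext m
    simp
  rw [← prodZModChar_apply hv] at he
  rw [← prodZModChar_apply hv fun m => c * e m, hsmul, AddChar.map_nsmul_eq_pow, he, one_pow]

end RootsOfUnity

section Stepanov

variable {K ι : Type*} [Field K] [Fintype ι] {ℓ J : ℕ}

/-- Stepanov's auxiliary polynomial `∑ a (c, j) * g c * (X - b m₀) ^ (q * j)`, where `g c` is the
product of the `X - b m` raised to `w` times the residue of `c * e m` modulo `ℓ`. In a field with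
`q = w * ℓ + 1` elements, `g c` takes the value `∏ m, (z - b m) ^ (w * c * e m)` at `z` as soon as
`z` differs from all `b m`. -/
noncomputable def stepanovPoly [NeZero ℓ] (q w : ℕ) (b : ι → K) (e : ι → ZMod ℓ) (m₀ : ι)
    (a : ZMod ℓ × Fin J → K[X]) : K[X] :=
  ∑ x, a x * rootsPoly b (fun m => w * (x.1 * e m).val) * ((X - C (b m₀)) ^ q) ^ (x.2 : ℕ)

theorem add_le_or_add_le_of_ne_or_ne {w q i i' j j' : ℕ} (hwq : w * ℓ ≤ q) (hi : i < ℓ)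
    (hi' : i' < ℓ) (hne : i ≠ i' ∨ j ≠ j') :
    w * i + q * j + w ≤ w * i' + q * j' ∨ w * i' + q * j' + w ≤ w * i + q * j := by
  have hwi : w * (i + 1) ≤ q := (Nat.mul_le_mul_left w hi).trans hwq
  have hwi' : w * (i' + 1) ≤ q := (Nat.mul_le_mul_left w hi').trans hwq
  rcases lt_trichotomy j j' with hj | rfl | hj
  · have : q * (j + 1) ≤ q * j' := Nat.mul_le_mul_left q hj
    left; linarith [Nat.zero_le (w * i')]
  · rcases lt_or_gt_of_ne (hne.resolve_right (· rfl)) with h | h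
    · have : w * (i + 1) ≤ w * i' := Nat.mul_le_mul_left w h
      left; linarith
    · have : w * (i' + 1) ≤ w * i := Nat.mul_le_mul_left w h
      right; linarith
  · have : q * (j' + 1) ≤ q * j := Nat.mul_le_mul_left q hj
    right; linarith [Nat.zero_le (w * i)]

theorem stepanovPoly_ne_zero [Fact ℓ.Prime] {q w : ℕ} (hwq : w * ℓ ≤ q) {b : ι → K}
    (hb : Function.Injective b) {e : ι → ZMod ℓ} {m₀ : ι} (he : e m₀ ≠ 0)
    {a : ZMod ℓ × Fin J → K[X]} (ha : ∀ x, (a x).degree < w) (ha0 : a ≠ 0) :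
    stepanovPoly q w b e m₀ a ≠ 0 := by
  classical
  intro hzero
  set cofactor : ZMod ℓ × Fin J → K[X] :=
    fun x => ∏ m ∈ Finset.univ.erase m₀, (X - C (b m)) ^ (w * (x.1 * e m).val)
  have hsum : ∑ x : ZMod ℓ × Fin J, (X - C (b m₀)) ^ (w * (x.1 * e m₀).val + q * (x.2 : ℕ)) *
      (a x * cofactor x) = 0 := by
    rw [← hzero, stepanovPoly]
    refine Finset.sum_congr rfl fun x _ => ?_
    rw [rootsPoly, ← Finset.mul_prod_erase _ _ (Finset.mem_univ m₀), ← pow_mul, pow_add]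
    ring
  have hcop (x) : IsCoprime ((X - C (b m₀)) ^ w) (cofactor x) :=
    IsCoprime.prod_right fun m hm =>
      (pairwise_coprime_X_sub_C hb (Finset.ne_of_mem_erase hm).symm).pow
  refine ha0 (funext fun x => ?_)
  refine (mul_eq_zero.1 <| eq_zero_of_sum_pow_mul_eq_zero (w := w) (X_sub_C_ne_zero (b m₀))
    ?_ ?_ hsum x).resolve_right ?_
  · rintro ⟨c, j⟩ ⟨c', j'⟩ hne
    refine add_le_or_add_le_of_ne_or_ne hwq (ZMod.val_lt _) (ZMod.val_lt _) ?_
    contrapose! hne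
    exact Prod.ext (mul_right_cancel₀ he (ZMod.val_injective ℓ hne.1)) (Fin.ext hne.2)
  · intro x hx hdvd
    have hle := degree_le_of_dvd ((hcop x).dvd_of_dvd_mul_right hdvd) (left_ne_zero_of_mul hx)
    rw [degree_pow, degree_X_sub_C, nsmul_one] at hle
    exact (ha x).not_ge hle
  · exact Finset.prod_ne_zero_iff.2 fun m _ => pow_ne_zero _ (X_sub_C_ne_zero _)

theorem natDegree_stepanovPoly_le [NeZero ℓ] {q w : ℕ} (hwq : w * ℓ ≤ q) (b : ι → K)
    (e : ι → ZMod ℓ) (m₀ : ι) {a : ZMod ℓ × Fin J → K[X]} (ha : ∀ x, (a x).degree < w) :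
    (stepanovPoly q w b e m₀ a).natDegree ≤ q * (J + Fintype.card ι) := by
  refine natDegree_sum_le_of_forall_le _ _ fun x _ => ?_
  have hval (c : ZMod ℓ) : w * c.val ≤ q := (Nat.mul_le_mul_left w (ZMod.val_lt c).le).trans hwq
  have hwq' : w ≤ q := (Nat.le_mul_of_pos_right w (NeZero.pos ℓ)).trans hwq
  have ha' : (a x).natDegree ≤ q := (natDegree_le_of_degree_le (ha x).le).trans hwq'
  have hroots : (rootsPoly b fun m => w * (x.1 * e m).val).natDegree ≤ q * Fintype.card ι := by
    rw [natDegree_rootsPoly, mul_comm]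
    exact Finset.sum_le_card_nsmul _ _ q fun m _ => hval _
  have hpow : (((X - C (b m₀)) ^ q) ^ (x.2 : ℕ)).natDegree = q * x.2 := by
    rw [← pow_mul, natDegree_pow, natDegree_X_sub_C, mul_one]
  have hJ : q * ((x.2 : ℕ) + 1) ≤ q * J := Nat.mul_le_mul_left q x.2.2
  calc _ ≤ (a x).natDegree + (rootsPoly b fun m => w * (x.1 * e m).val).natDegree + q * x.2 := by
        rw [← hpow]
        exact natDegree_mul_le.trans (Nat.add_le_add_right natDegree_mul_le _)
    _ ≤ q + q * Fintype.card ι + q * x.2 := by gcongr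
    _ ≤ q * (J + Fintype.card ι) := by linarith

theorem rootsPoly_one_pow_mul_iterate_derivative_stepanovPoly [DecidableEq ι] [NeZero ℓ] {q : ℕ}
    (hq : (q : K) = 0) (w : ℕ) (b : ι → K) (e : ι → ZMod ℓ) (m₀ : ι)
    (a : ZMod ℓ × Fin J → K[X]) (i : ℕ) :
    rootsPoly b 1 ^ i * derivative^[i] (stepanovPoly q w b e m₀ a) = ∑ x,
      twistedDerivative (rootsPoly b 1) (logDerivNumerator b fun m => w * (x.1 * e m).val) i (a x) *
        rootsPoly b (fun m => w * (x.1 * e m).val) * ((X - C (b m₀)) ^ q) ^ (x.2 : ℕ) := by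
  rw [stepanovPoly, iterate_derivative_sum, Finset.mul_sum]
  refine Finset.sum_congr rfl fun x _ =>
    pow_mul_iterate_derivative_mul (rootsPoly_one_mul_derivative b _) ?_ i (a x)
  rw [derivative_pow, derivative_X_sub_C_pow, hq, C_0, zero_mul, mul_zero]

theorem exists_coeff_forall_sum_twistedDerivative_eq_zero {κ : Type*} [Fintype κ] {w M : ℕ}
    {P : K[X]} {Q : κ → K[X]} {k : ℕ} (hP : P.natDegree ≤ k) (hQ : ∀ c, (Q c).natDegree ≤ k) (β : K)
    (hcount : M * (w + J + M * k) < w * J * Fintype.card κ) :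
    ∃ a : κ × Fin J → K[X], a ≠ 0 ∧ (∀ x, (a x).degree < w) ∧ ∀ i < M,
      ∑ x, twistedDerivative P (Q x.1) i (a x) * (X - C β) ^ (x.2 : ℕ) = 0 := by
  let Φ (i : Fin M) : (κ × Fin J → K[X]) →ₗ[K] K[X] :=
    ∑ x, LinearMap.mulRight K ((X - C β) ^ (x.2 : ℕ)) ∘ₗ twistedDerivative P (Q x.1) i ∘ₗ
      LinearMap.proj x
  have hΦ (i a) : Φ i a = ∑ x, twistedDerivative P (Q x.1) i (a x) * (X - C β) ^ (x.2 : ℕ) := by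
    simp [Φ]
  have hdeg (i) (a : κ × Fin J → K[X]) (ha : ∀ x, (a x).degree < w) :
      (Φ i a).degree < (w + J + M * k : ℕ) := by
    rw [hΦ]
    refine mem_degreeLT.1 (Submodule.sum_mem _ fun x _ => mem_degreeLT.2 ?_)
    rcases eq_or_ne (a x) 0 with h0 | h0
    · rw [h0, map_zero, zero_mul, degree_zero]
      exact WithBot.bot_lt_coe _
    have hax : (a x).natDegree < w := (natDegree_lt_iff_degree_lt h0).2 (ha x)
    have hD := natDegree_twistedDerivative_le hP (hQ x.1) i (a x)
    have hik : (i : ℕ) * k ≤ M * k := Nat.mul_le_mul_right k i.2.le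
    have hx := x.2.2
    refine degree_le_natDegree.trans_lt (Nat.cast_lt.2 (natDegree_mul_le.trans_lt ?_))
    rw [natDegree_pow, natDegree_X_sub_C]
    omega
  obtain ⟨a, ha0, ha, hΦa⟩ := exists_ne_zero_degree_lt_forall_map_eq_zero Φ hdeg (by
    rwa [Fintype.card_prod, Fintype.card_fin, mul_comm (Fintype.card κ), ← mul_assoc])
  exact ⟨a, ha0, ha, fun i hi => by rw [← hΦ ⟨i, hi⟩, hΦa]⟩

section Fintype

variable [Fintype K] [Fact ℓ.Prime]

theorem isRoot_iterate_derivative_stepanovPoly {w : ℕ} (hwℓ : w * ℓ = Fintype.card K - 1)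
    [DecidableEq ι] {b : ι → K} {e : ι → ZMod ℓ} {m₀ : ι} {a : ZMod ℓ × Fin J → K[X]} {i : ℕ}
    (ha : ∑ x, twistedDerivative (rootsPoly b 1) (logDerivNumerator b fun m =>
      w * (x.1 * e m).val) i (a x) * (X - C (b m₀)) ^ (x.2 : ℕ) = 0)
    {z : K} (hz : ∀ m, z - b m ≠ 0) (hze : ∏ m, (z - b m) ^ (w * (e m).val) = 1) :
    (derivative^[i] (stepanovPoly (Fintype.card K) w b e m₀ a)).IsRoot z := by
  have hroots (m : ι) : ((z - b m) ^ w) ^ ℓ = 1 := by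
    rw [← pow_mul, hwℓ, FiniteField.pow_card_sub_one_eq_one _ (hz m)]
  have hval (c : ZMod ℓ) : (rootsPoly b fun m => w * (c * e m).val).eval z = 1 := by
    simp only [pow_mul] at hze
    simpa only [eval_rootsPoly, pow_mul] using prod_pow_mul_val_eq_one hroots hze c
  have hP : (rootsPoly b 1 ^ i).eval z ≠ 0 := by
    rw [eval_pow, eval_rootsPoly]
    exact pow_ne_zero _ (Finset.prod_ne_zero_iff.2 fun m _ => pow_ne_zero _ (hz m))
  have heval := congrArg (eval z) <| rootsPoly_one_pow_mul_iterate_derivative_stepanovPoly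
    (FiniteField.cast_card_eq_zero K) w b e m₀ a i
  rw [eval_mul] at heval
  refine (mul_eq_zero.1 (heval.trans ?_)).resolve_left hP
  rw [← eval_zero (x := z), ← ha]
  simp [eval_finsetSum, hval, FiniteField.pow_card]

theorem card_mul_le_of_prod_pow_eq_one {w M : ℕ} (hwℓ : w * ℓ = Fintype.card K - 1) {b : ι → K}
    (hb : Function.Injective b) {e : ι → ZMod ℓ} (he : e ≠ 0)
    (hM : ((M - 1).factorial : K) ≠ 0)
    (hcount : M * (w + J + M * Fintype.card ι) < w * J * ℓ) {S : Finset K}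
    (hS : ∀ z ∈ S, (∀ m, z - b m ≠ 0) ∧ ∏ m, (z - b m) ^ (w * (e m).val) = 1) :
    S.card * M ≤ Fintype.card K * (J + Fintype.card ι) := by
  classical
  obtain ⟨m₀, hm₀⟩ := Function.ne_iff.1 he
  have hP : (rootsPoly b 1).natDegree ≤ Fintype.card ι := by
    simp [natDegree_rootsPoly]
  obtain ⟨a, ha0, ha, hvanish⟩ := exists_coeff_forall_sum_twistedDerivative_eq_zero
    (κ := ZMod ℓ) (J := J) hP
    (fun c => natDegree_logDerivNumerator_le b fun m => w * (c * e m).val) (b m₀)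
    (by rwa [ZMod.card])
  have hwq : w * ℓ ≤ Fintype.card K := hwℓ.trans_le (Nat.sub_le _ _)
  calc S.card * M ≤ (stepanovPoly (Fintype.card K) w b e m₀ a).natDegree :=
        card_mul_le_natDegree_of_pow_X_sub_C_dvd (stepanovPoly_ne_zero hwq hb hm₀ ha ha0)
          fun z hz => pow_X_sub_C_dvd_of_isRoot_iterate_derivative hM fun i hi =>
            isRoot_iterate_derivative_stepanovPoly hwℓ (hvanish i hi) (hS z hz).1 (hS z hz).2
    _ ≤ _ := natDegree_stepanovPoly_le hwq b e m₀ ha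

end Fintype

end Stepanov

end PolynomialMethod

section Averaging

open Finset

theorem card_le_card_filter_eq_one_mul {G R : Type*} [AddCommGroup G] [Fintype G] [CommRing R]
    [IsDomain R] [DecidableEq R] {ℓ : ℕ} [NeZero ℓ] (ψ : AddChar G R) (hψ : ∀ x, ψ x ^ ℓ = 1) :
    Fintype.card G ≤ #{x | ψ x = 1} * ℓ := by
  set φ : Multiplicative G →* Rˣ := ψ.toMonoidHom.toHomUnits
  have hker : Nat.card φ.ker = #{x | ψ x = 1} := by
    rw [← Fintype.card_subtype, ← Nat.card_eq_fintype_card]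
    exact Nat.card_congr <| Multiplicative.toAdd.subtypeEquiv fun x => by
      rw [MonoidHom.mem_ker, Units.ext_iff]; rfl
  have hrange : Nat.card φ.range ≤ ℓ := by
    refine (Subgroup.card_le_of_le ?_).trans (card_rootsOfUnity R ℓ)
    rintro _ ⟨x, rfl⟩
    exact (mem_rootsOfUnity' _ _).2 (hψ _)
  calc Fintype.card G = Nat.card φ.ker * φ.ker.index := by
        rw [Subgroup.card_mul_index, ← Nat.card_eq_fintype_card]; rfl
    _ ≤ _ := by
      rw [hker, Subgroup.index_ker]
      exact Nat.mul_le_mul_left _ hrange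

theorem card_mul_add_card_trivial_mul_le {α G R : Type*} [Fintype α] [AddCommGroup G] [Fintype G]
    [CommRing R] [IsDomain R] [DecidableEq R] {ℓ : ℕ} [NeZero ℓ] (ψ : α → AddChar G R)
    (hψ : ∀ z x, ψ z x ^ ℓ = 1) {B : ℝ} (hB0 : 0 ≤ B)
    (hB : ∀ x ≠ 0, (#{z | ψ z x = 1} : ℝ) ≤ B) :
    Fintype.card G * (Fintype.card α + #{z | ∀ x, ψ z x = 1} * (ℓ - 1 : ℝ)) ≤
      (Fintype.card α + Fintype.card G * B) * ℓ := by
  classical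
  have hdouble : ∑ z, #{x | ψ z x = 1} = ∑ x, #{z | ψ z x = 1} :=
    sum_card_bipartiteAbove_eq_sum_card_bipartiteBelow _
  have hlower (z : α) :
      Fintype.card G + (if ∀ x, ψ z x = 1 then Fintype.card G * (ℓ - 1 : ℝ) else 0) ≤
        #{x | ψ z x = 1} * (ℓ : ℝ) := by
    split_ifs with hz
    · simp only [hz, filter_true, card_univ]
      linarith
    · rw [add_zero]
      exact_mod_cast card_le_card_filter_eq_one_mul (ψ z) (hψ z)
  have hupper (x : G) :
      (#{z | ψ z x = 1} : ℝ) ≤ (if x = 0 then (Fintype.card α : ℝ) else 0) + B := by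
    split_ifs with hx
    · exact le_add_of_le_of_nonneg (Nat.cast_le.2 (card_le_univ _)) hB0
    · simpa using hB x hx
  calc (Fintype.card G * (Fintype.card α + #{z | ∀ x, ψ z x = 1} * (ℓ - 1)) : ℝ)
      = ∑ z, (Fintype.card G +
          (if ∀ x, ψ z x = 1 then Fintype.card G * (ℓ - 1 : ℝ) else 0)) := by
        rw [sum_add_distrib, ← sum_filter, sum_const, sum_const, card_univ, nsmul_eq_mul,
          nsmul_eq_mul]
        ring
    _ ≤ ∑ z, #{x | ψ z x = 1} * (ℓ : ℝ) := sum_le_sum fun z _ => hlower z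
    _ = (∑ x, (#{z | ψ z x = 1} : ℝ)) * ℓ := by
        rw [← sum_mul]
        exact_mod_cast congrArg (· * ℓ) hdouble
    _ ≤ (∑ x : G, ((if x = 0 then (Fintype.card α : ℝ) else 0) + B)) * ℓ := by
        gcongr with x
        exact hupper x
    _ = _ := by simp [sum_add_distrib]

/-- The additive subgroup of families `e : ι → A` with `∑ m, e m = 0`. -/
def sumZeroSubgroup (ι A : Type*) [Fintype ι] [AddCommGroup A] : AddSubgroup (ι → A) :=
  (∑ m, Pi.evalAddMonoidHom (fun _ => A) m).ker

theorem mem_sumZeroSubgroup {ι A : Type*} [Fintype ι] [AddCommGroup A] {e : ι → A} :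
    e ∈ sumZeroSubgroup ι A ↔ ∑ m, e m = 0 := by
  simp [sumZeroSubgroup, AddMonoidHom.mem_ker]

theorem card_pow_le_card_sumZeroSubgroup (ι A : Type*) [Fintype ι] [AddCommGroup A] [Finite A]
    [Nonempty ι] :
    Nat.card A ^ (Fintype.card ι - 1) ≤ Nat.card (sumZeroSubgroup ι A) := by
  refine Nat.le_of_mul_le_mul_right ?_ (Nat.card_pos (α := A))
  calc Nat.card A ^ (Fintype.card ι - 1) * Nat.card A = Nat.card (ι → A) := by
        rw [← pow_succ, Nat.sub_add_cancel Fintype.card_pos, ← Nat.card_eq_fintype_card,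
          Nat.card_fun]
    _ = Nat.card (sumZeroSubgroup ι A) * (sumZeroSubgroup ι A).index :=
        (AddSubgroup.card_mul_index _).symm
    _ ≤ _ := by
        rw [sumZeroSubgroup, AddSubgroup.index_ker]
        exact Nat.mul_le_mul_left _ (Nat.card_le_card_of_injective _ Subtype.val_injective)

theorem prod_pow_val_eq_one_of_sum_eq_zero {M ι : Type*} [CommMonoid M] [Fintype ι] {ℓ : ℕ}
    [NeZero ℓ] {v : M} (hv : v ^ ℓ = 1) {e : ι → ZMod ℓ} (he : ∑ m, e m = 0) :
    ∏ m, v ^ (e m).val = 1 := by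
  obtain ⟨n, hn⟩ : ℓ ∣ ∑ m, (e m).val := by
    rw [← ZMod.natCast_eq_zero_iff, Nat.cast_sum, ← he]
    exact sum_congr rfl fun m _ => ZMod.natCast_zmod_val _
  rw [prod_pow_eq_pow_sum, hn, pow_mul, hv, one_pow]

theorem card_sub_card_le_card_forall_sub_ne_zero {K ι : Type*} [AddGroup K] [Fintype K]
    [Fintype ι] [DecidableEq K] (b : ι → K) :
    (Fintype.card K - Fintype.card ι : ℝ) ≤ Fintype.card {z : K // ∀ m, z - b m ≠ 0} := by
  have hcompl : Fintype.card {z : K // ¬ ∀ m, z - b m ≠ 0} ≤ Fintype.card ι := by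
    rw [Fintype.card_subtype]
    refine (card_le_card fun z hz => ?_).trans (card_image_le (s := univ) (f := b))
    obtain ⟨m, hm⟩ := not_forall_not.1 (mem_filter.1 hz).2
    exact mem_image.2 ⟨m, mem_univ m, (sub_eq_zero.1 hm).symm⟩
  have hadd := Fintype.card_subtype_compl fun z : K => ∀ m, z - b m ≠ 0
  rw [sub_le_iff_le_add]
  exact_mod_cast (by omega : Fintype.card K ≤ _ + Fintype.card ι)

theorem card_sumZeroSubgroup_mul_le {K ι : Type*} [Field K] [Fintype K] [Fintype ι] [Nonempty ι]
    {ℓ w : ℕ} [NeZero ℓ] (hwℓ : w * ℓ = Fintype.card K - 1) (b : ι → K) {B : ℝ} (hB0 : 0 ≤ B)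
    (hB : ∀ e : ι → ZMod ℓ, e ≠ 0 → ∀ S : Finset K,
      (∀ z ∈ S, (∀ m, z - b m ≠ 0) ∧ ∏ m, (z - b m) ^ (w * (e m).val) = 1) → #S ≤ B)
    {Z : Finset K} (hZ : ∀ z ∈ Z, (∀ m, z - b m ≠ 0) ∧ ∀ m m', (z - b m) ^ w = (z - b m') ^ w) :
    Nat.card (sumZeroSubgroup ι (ZMod ℓ)) *
        (Fintype.card K - Fintype.card ι + #Z * (ℓ - 1 : ℝ)) ≤
      (Fintype.card K + Nat.card (sumZeroSubgroup ι (ZMod ℓ)) * B) * ℓ := by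
  classical
  have hroots (z : {z : K // ∀ m, z - b m ≠ 0}) (m : ι) : ((z.1 - b m) ^ w) ^ ℓ = 1 := by
    rw [← pow_mul, hwℓ, FiniteField.pow_card_sub_one_eq_one _ (z.2 m)]
  let ψ (z : {z : K // ∀ m, z - b m ≠ 0}) : AddChar (sumZeroSubgroup ι (ZMod ℓ)) K :=
    (prodZModChar (hroots z)).compAddMonoidHom (AddSubgroup.subtype _)
  have hψ (z x) : ψ z x = ∏ m, (z.1 - b m) ^ (w * (x.1 m).val) := by
    simp only [pow_mul]
    exact prodZModChar_apply _ _
  have hψpow (z x) : ψ z x ^ ℓ = 1 := by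
    rw [hψ, ← prod_pow]
    exact prod_eq_one fun m _ => by rw [pow_mul, pow_right_comm, hroots, one_pow]
  have hψB : ∀ x ≠ 0, (#{z | ψ z x = 1} : ℝ) ≤ B := by
    intro x hx
    rw [← card_map (.subtype _)]
    refine hB x (by simpa using hx) _ fun z hz => ?_
    obtain ⟨y, hy, rfl⟩ := mem_map.1 hz
    exact ⟨y.2, (hψ y x).symm.trans (mem_filter.1 hy).2⟩
  have hψZ : #Z ≤ #{z | ∀ x, ψ z x = 1} := by
    rw [← card_map (.subtype _)]
    refine card_le_card fun z hz => mem_map.2 ⟨⟨z, (hZ z hz).1⟩, ?_, rfl⟩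
    refine mem_filter.2 ⟨mem_univ _, fun x => ?_⟩
    obtain ⟨m₀⟩ := ‹Nonempty ι›
    simp only [hψ, pow_mul, (hZ z hz).2 _ m₀]
    exact prod_pow_val_eq_one_of_sum_eq_zero (hroots ⟨z, (hZ z hz).1⟩ m₀)
      (mem_sumZeroSubgroup.1 x.2)
  have hmain := card_mul_add_card_trivial_mul_le ψ hψpow hB0 hψB
  rw [← Nat.card_eq_fintype_card] at hmain
  have hℓ : (1 : ℝ) ≤ ℓ := Nat.one_le_cast.2 (NeZero.pos ℓ)
  calc _ ≤ _ := ?_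
    _ ≤ _ := hmain
    _ ≤ _ := ?_
  · gcongr
    exact card_sub_card_le_card_forall_sub_ne_zero b
  · gcongr; exact Fintype.card_subtype_le _

end Averaging

section ParameterChoice

open Finset

theorem card_le_of_forall_sub_pow_eq_sub_pow {R : Type*} [CommRing R] [IsDomain R] {b₀ b₁ : R}
    (hb : b₀ ≠ b₁) {w : ℕ} (hw : w ≠ 0) {Z : Finset R}
    (hZ : ∀ z ∈ Z, (z - b₀) ^ w = (z - b₁) ^ w) : #Z ≤ w := by
  set f : Polynomial R := (.X - .C b₀) ^ w - (.X - .C b₁) ^ w with hf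
  have hf0 : f ≠ 0 := by
    intro h
    have := congrArg (Polynomial.eval b₀) h
    simp [hf, hw, sub_eq_zero, hb] at this
  calc #Z ≤ f.natDegree := Polynomial.card_le_degree_of_subset_roots fun z hz =>
        (Polynomial.mem_roots hf0).2 (by simp [hf, hZ z hz])
    _ ≤ w := by
        refine (Polynomial.natDegree_sub_le _ _).trans ?_
        simp

theorem mul_add_lt_mul_of_add_eq_mul {ℓ w J k M : ℕ} (hℓ : 0 < ℓ)
    (hM : M + (1 + ℓ * k) = ℓ * J) (hJ : (ℓ * J) ^ 2 ≤ w * ℓ) :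
    M * (w + J + M * k) < w * J * ℓ := by
  have hMJ : M < ℓ * J := by omega
  have hJ0 : 0 < J := Nat.pos_of_ne_zero fun h => by simp [h] at hM
  refine lt_of_mul_lt_mul_left (a := ℓ) ?_ (Nat.zero_le _)
  have hgap : M * (ℓ * J + M * (ℓ * k)) < w * ℓ * (1 + ℓ * k) := calc
    M * (ℓ * J + M * (ℓ * k)) ≤ M * (ℓ * J + ℓ * J * (ℓ * k)) := by gcongr
    _ = M * (ℓ * J * (1 + ℓ * k)) := by ring
    _ < ℓ * J * (ℓ * J * (1 + ℓ * k)) := by gcongr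
    _ = (ℓ * J) ^ 2 * (1 + ℓ * k) := by ring
    _ ≤ w * ℓ * (1 + ℓ * k) := by gcongr
  calc ℓ * (M * (w + J + M * k)) = w * ℓ * M + M * (ℓ * J + M * (ℓ * k)) := by ring
    _ < w * ℓ * M + w * ℓ * (1 + ℓ * k) := by gcongr
    _ = ℓ * (w * J * ℓ) := by rw [← mul_add, hM]; ring

theorem exists_mul_sq_lt_and_sqrt_lt {p ℓ : ℕ} (hp : p.Prime) (hℓ : 0 < ℓ) :
    ∃ J : ℕ, (ℓ * J) ^ 2 < p ∧ √p < ℓ * J + ℓ := by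
  have hℓ' : (0 : ℝ) < ℓ := Nat.cast_pos.2 hℓ
  refine ⟨⌊√p / ℓ⌋₊, lt_of_le_of_ne ?_ ?_, ?_⟩
  · have := Nat.floor_le (div_nonneg (Real.sqrt_nonneg p) hℓ'.le)
    rw [le_div_iff₀ hℓ', mul_comm] at this
    exact_mod_cast (Real.le_sqrt (by positivity) (Nat.cast_nonneg p)).1 this
  · intro h
    exact hp.prime.not_isSquare ⟨_, by rw [← h, sq]⟩
  · have := Nat.lt_floor_add_one (√p / ℓ)
    rw [div_lt_iff₀ hℓ'] at this
    linarith

theorem sqrt_mul_add_le_of_mul_sqrt_le {R k l M c : ℝ} (hR : 0 < R) (hk : 0 ≤ k)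
    (hkR : 100 * k ≤ R) (hl : 0 ≤ l) (hc : 0 < c) (hM : c * R ≤ M)
    (h : l + 0.01 + (2 * l * k + 1) / c ≤ 5 * k * (l - 1)) :
    R * l + k + R ^ 2 * (2 * l * k + 1) / M ≤ 5 * k * R * (l - 1) := calc
  R * l + k + R ^ 2 * (2 * l * k + 1) / M
      ≤ R * l + R / 100 + R ^ 2 * (2 * l * k + 1) / (c * R) := by
        gcongr
        linarith
  _ = R * (l + 0.01 + (2 * l * k + 1) / c) := by field_simp; ring
  _ ≤ R * (5 * k * (l - 1)) := by gcongr
  _ = 5 * k * R * (l - 1) := by ring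

theorem sqrt_mul_add_le_of_lt_add {R k M : ℝ} {ℓ : ℕ} (hℓ : 2 ≤ ℓ) (hk : 13 ≤ k)
    (hkR : 100 * k ≤ R) (hℓR : 5 * k * ℓ < R) (hM : R < M + (1 + ℓ * k) + ℓ) :
    R * ℓ + k + R ^ 2 * (2 * ℓ * k + 1) / M ≤ 5 * k * R * (ℓ - 1) := by
  rcases hℓ.eq_or_lt with rfl | hℓ
  · push_cast at *
    refine sqrt_mul_add_le_of_mul_sqrt_le (c := 0.97) (by linarith) (by linarith) hkR (by norm_num)
      (by norm_num) (by linarith) ?_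
    rw [← le_sub_iff_add_le', div_le_iff₀ (by norm_num)]
    linarith
  · have hℓ3 : (3 : ℝ) ≤ ℓ := by exact_mod_cast hℓ
    have hkℓ : 13 * (ℓ : ℝ) ≤ k * ℓ := by gcongr
    refine sqrt_mul_add_le_of_mul_sqrt_le (c := 0.78) (by linarith) (by linarith) hkR (by linarith)
      (by norm_num) (by linarith) ?_
    rw [← le_sub_iff_add_le', div_le_iff₀ (by norm_num)]
    linarith [mul_nonneg (sub_nonneg.2 hℓ3) (sub_nonneg.2 hk)]

theorem sqrt_le_card_sumZeroSubgroup {ι : Type*} [Fintype ι] [Nonempty ι] {p ℓ : ℕ} (hℓ : 2 ≤ ℓ)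
    (hp : p ≤ 4 ^ (Fintype.card ι - 1)) : √p ≤ Nat.card (sumZeroSubgroup ι (ZMod ℓ)) := by
  have : NeZero ℓ := ⟨by omega⟩
  refine Real.sqrt_le_iff.2 ⟨Nat.cast_nonneg _, ?_⟩
  have hcard := card_pow_le_card_sumZeroSubgroup ι (ZMod ℓ)
  rw [Nat.card_zmod] at hcard
  have hpow : 4 ^ (Fintype.card ι - 1) = (2 ^ (Fintype.card ι - 1)) ^ 2 := by
    rw [← pow_mul, mul_comm, pow_mul]; rfl
  have hle : 2 ^ (Fintype.card ι - 1) ≤ Nat.card (sumZeroSubgroup ι (ZMod ℓ)) :=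
    (Nat.pow_le_pow_left hℓ _).trans hcard
  exact_mod_cast hp.trans (hpow.trans_le (Nat.pow_le_pow_left hle 2))

section ZMod

variable {p ℓ w : ℕ} [Fact p.Prime] [Fact ℓ.Prime] {ι : Type*} [Fintype ι] {b : ι → ZMod p}

theorem card_mul_sub_one_le_of_forall_sub_pow_eq [Nonempty ι] (hwℓ : w * ℓ = p - 1)
    (hb : Function.Injective b) (hp : p ≤ 4 ^ (Fintype.card ι - 1)) {J M : ℕ} (hM0 : 0 < M)
    (hM : M + (1 + ℓ * Fintype.card ι) = ℓ * J) (hJ : (ℓ * J) ^ 2 < p) {Z : Finset (ZMod p)}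
    (hZ : ∀ z ∈ Z, (∀ m, z - b m ≠ 0) ∧ ∀ m m', (z - b m) ^ w = (z - b m') ^ w) :
    #Z * (ℓ - 1 : ℝ) ≤
      √p * ℓ + Fintype.card ι + √p ^ 2 * (2 * ℓ * Fintype.card ι + 1) / M := by
  have hpp : p.Prime := Fact.out
  have hℓ : 2 ≤ ℓ := (Fact.out : ℓ.Prime).two_le
  have hJp : ℓ * J < p := (Nat.le_self_pow two_ne_zero _).trans_lt hJ
  have hfact : (((M - 1).factorial : ℕ) : ZMod p) ≠ 0 := by
    rw [Ne, ZMod.natCast_eq_zero_iff, hpp.dvd_factorial]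
    omega
  have hcount := mul_add_lt_mul_of_add_eq_mul (w := w) (by omega) hM (by omega)
  have hM0' : (0 : ℝ) < M := Nat.cast_pos.2 hM0
  set B : ℝ := p * (J + Fintype.card ι) / M with hB
  have hstepanov (e : ι → ZMod ℓ) (he : e ≠ 0) (S : Finset (ZMod p))
      (hS : ∀ z ∈ S, (∀ m, z - b m ≠ 0) ∧ ∏ m, (z - b m) ^ (w * (e m).val) = 1) : #S ≤ B := by
    have := card_mul_le_of_prod_pow_eq_one (by rwa [ZMod.card]) hb he hfact hcount hS
    rw [ZMod.card] at this
    rw [hB, le_div_iff₀ hM0']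
    exact_mod_cast this
  have havg := card_sumZeroSubgroup_mul_le (by rwa [ZMod.card]) b (by positivity) hstepanov hZ
  rw [ZMod.card] at havg
  have hH := sqrt_le_card_sumZeroSubgroup hℓ hp
  have hsqrt : 0 < √(p : ℝ) := Real.sqrt_pos.2 (Nat.cast_pos.2 hpp.pos)
  set H : ℝ := (Nat.card (sumZeroSubgroup ι (ZMod ℓ)) : ℝ)
  have hBℓ : B * ℓ = p + p * (2 * ℓ * Fintype.card ι + 1) / M := by
    have : (M + (1 + ℓ * Fintype.card ι) : ℝ) = ℓ * J := by exact_mod_cast hM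
    rw [hB]
    field_simp
    linear_combination -p * this
  have hdiv : p - Fintype.card ι + #Z * (ℓ - 1 : ℝ) ≤ √p * ℓ + B * ℓ := by
    refine le_of_mul_le_mul_left (havg.trans ?_) (hsqrt.trans_le hH)
    calc (p + H * B) * ℓ = √p * √p * ℓ + H * B * ℓ := by
          rw [Real.mul_self_sqrt (Nat.cast_nonneg p)]; ring
      _ ≤ H * √p * ℓ + H * B * ℓ := by gcongr
      _ = H * (√p * ℓ + B * ℓ) := by ring
  rw [Real.sq_sqrt (Nat.cast_nonneg p)]
  linarith

theorem card_le_mul_sqrt_of_forall_sub_pow_eq (hwℓ : w * ℓ = p - 1)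
    (hb : Function.Injective b) (hk : 13 ≤ Fintype.card ι) (hp : p ≤ 4 ^ (Fintype.card ι - 1))
    (hkp : 100 * Fintype.card ι ≤ √p) {Z : Finset (ZMod p)}
    (hZ : ∀ z ∈ Z, (∀ m, z - b m ≠ 0) ∧ ∀ m m', (z - b m) ^ w = (z - b m') ^ w) :
    #Z ≤ 5 * Fintype.card ι * √p := by
  have hk' : (13 : ℝ) ≤ Fintype.card ι := by exact_mod_cast hk
  have hℓ : 2 ≤ ℓ := (Fact.out : ℓ.Prime).two_le
  have hℓ' : (2 : ℝ) ≤ ℓ := Nat.ofNat_le_cast.2 hℓ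
  have hp1 := (Fact.out : p.Prime).one_lt
  rcases le_or_gt √p (5 * Fintype.card ι * ℓ) with hcase | hcase
  · obtain ⟨m₀, m₁, hne⟩ := Fintype.one_lt_card_iff.1 (by omega : 1 < Fintype.card ι)
    have hw : w ≠ 0 := by rintro rfl; omega
    have hZw : #Z ≤ w := card_le_of_forall_sub_pow_eq_sub_pow (hb.ne hne) hw
      fun z hz => (hZ z hz).2 m₀ m₁
    refine le_of_mul_le_mul_right ?_ (by linarith : (0 : ℝ) < ℓ)
    calc (#Z * ℓ : ℝ) ≤ p := by exact_mod_cast (Nat.mul_le_mul_right ℓ hZw).trans (by omega)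
      _ = √p * √p := (Real.mul_self_sqrt (Nat.cast_nonneg p)).symm
      _ ≤ √p * (5 * Fintype.card ι * ℓ) := by gcongr
      _ = 5 * Fintype.card ι * √p * ℓ := by ring
  · obtain ⟨J, hJ, hpJ⟩ := exists_mul_sq_lt_and_sqrt_lt (Fact.out : p.Prime) (by omega : 0 < ℓ)
    have hlt : 1 + ℓ * Fintype.card ι < ℓ * J := by
      have : (1 + ℓ * Fintype.card ι : ℝ) < ℓ * J := by nlinarith
      exact_mod_cast this
    obtain ⟨M, hM⟩ := Nat.exists_eq_add_of_le' hlt.le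
    have hM' : (ℓ * J : ℝ) = M + (1 + ℓ * Fintype.card ι) := by exact_mod_cast hM
    have : Nonempty ι := Fintype.card_pos_iff.1 (by omega)
    refine le_of_mul_le_mul_right ?_ (by linarith : (0 : ℝ) < ℓ - 1)
    exact (card_mul_sub_one_le_of_forall_sub_pow_eq hwℓ hb hp (by omega) hM.symm hJ hZ).trans
      (sqrt_mul_add_le_of_lt_add hℓ hk' hkp hcase (hM' ▸ hpJ))

end ZMod

end ParameterChoice

section CoprimePairs

open Finset

theorem card_Ioc_filter_dvd_add_le {r : ℕ} (hr : 0 < r) (a Y : ℕ) :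
    #{n ∈ Ioc 0 Y | r ∣ n + a} ≤ Y / r + 1 := by
  have hshift : #{n ∈ Ioc 0 Y | r ∣ n + a} + a / r ≤ (Y + a) / r := by
    rw [← Nat.Ioc_filter_dvd_card_eq_div (Y + a), ← Nat.Ioc_filter_dvd_card_eq_div a,
      ← card_map (addRightEmbedding a), ← card_union_of_disjoint]
    · refine card_le_card fun x => ?_
      simp only [mem_union, mem_map, mem_filter, mem_Ioc, addRightEmbedding_apply]
      rintro (⟨n, hn, rfl⟩ | hx)
      · exact ⟨by omega, hn.2⟩
      · exact ⟨by omega, hx.2⟩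
    · rw [disjoint_left]
      simp only [mem_map, mem_filter, mem_Ioc, addRightEmbedding_apply]
      rintro x ⟨n, hn, rfl⟩ hx
      omega
  rw [Nat.add_div hr] at hshift
  split_ifs at hshift <;> omega

theorem card_filter_not_coprime_le (X Y : ℕ) :
    (#{t ∈ Ioc 0 X ×ˢ Ioc 0 Y | ¬ t.1.Coprime t.2} : ℝ) ≤ 3 / 4 * (X * Y) := by
  have hsub : {t ∈ Ioc 0 X ×ˢ Ioc 0 Y | ¬ t.1.Coprime t.2} ⊆
      (Ioc 1 (X + 2)).biUnion fun d => {q ∈ Ioc 0 X | d ∣ q} ×ˢ {n ∈ Ioc 0 Y | d ∣ n} := by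
    rintro ⟨q, n⟩ ht
    simp only [mem_filter, mem_product, mem_Ioc] at ht
    obtain ⟨⟨hq, hn⟩, hne⟩ := ht
    have hle := Nat.gcd_le_left n hq.1
    have hpos := Nat.gcd_pos_of_pos_left n hq.1
    rw [Nat.coprime_iff_gcd_eq_one] at hne
    simp only [mem_biUnion, mem_product, mem_filter, mem_Ioc]
    exact ⟨q.gcd n, by omega, ⟨hq, Nat.gcd_dvd_left q n⟩, hn, Nat.gcd_dvd_right q n⟩
  have hsum : ∑ d ∈ Ioc 1 (X + 2), ((d : ℝ) ^ 2)⁻¹ ≤ 3 / 4 := calc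
    _ = ((2 : ℕ) ^ 2 : ℝ)⁻¹ + ∑ d ∈ Ioc 2 (X + 2), ((d : ℝ) ^ 2)⁻¹ := by
      rw [← sum_Ioc_consecutive _ one_le_two (by omega),
        show Ioc 1 2 = {2} from Nat.Ioc_succ_singleton 1, sum_singleton]
    _ ≤ ((2 : ℕ) ^ 2 : ℝ)⁻¹ + ((2 : ℕ) : ℝ)⁻¹ := by
      gcongr
      refine (sum_Ioc_inv_sq_le_sub two_ne_zero (by omega)).trans (sub_le_self _ ?_)
      positivity
    _ = 3 / 4 := by norm_num
  calc (#{t ∈ Ioc 0 X ×ˢ Ioc 0 Y | ¬ t.1.Coprime t.2} : ℝ)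
      ≤ ∑ d ∈ Ioc 1 (X + 2), ((X / d : ℕ) * (Y / d : ℕ) : ℝ) := by
        have := (card_le_card hsub).trans card_biUnion_le
        simp only [card_product, Nat.Ioc_filter_dvd_card_eq_div] at this
        exact_mod_cast this
    _ ≤ ∑ d ∈ Ioc 1 (X + 2), ((d : ℝ) ^ 2)⁻¹ * (X * Y) := by
        refine sum_le_sum fun d _ => ?_
        calc ((X / d : ℕ) * (Y / d : ℕ) : ℝ) ≤ X / d * (Y / d) := by
              gcongr <;> exact Nat.cast_div_le
          _ = ((d : ℝ) ^ 2)⁻¹ * (X * Y) := by ring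
    _ = (∑ d ∈ Ioc 1 (X + 2), ((d : ℝ) ^ 2)⁻¹) * (X * Y) := (sum_mul ..).symm
    _ ≤ 3 / 4 * (X * Y) := by gcongr

theorem card_filter_exists_dvd_add_mul_le {r : ℕ} (hr : 0 < r) (k X Y : ℕ) :
    #{t ∈ Ioc 0 X ×ˢ Ioc 0 Y | ∃ m < k, r ∣ t.2 + m * t.1} ≤ k * X * (Y / r + 1) := by
  have hsub : {t ∈ Ioc 0 X ×ˢ Ioc 0 Y | ∃ m < k, r ∣ t.2 + m * t.1} ⊆
      (range k ×ˢ Ioc 0 X).biUnion fun u => {u.2} ×ˢ {n ∈ Ioc 0 Y | r ∣ n + u.1 * u.2} := by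
    rintro ⟨q, n⟩ ht
    simp only [mem_filter, mem_product] at ht
    obtain ⟨⟨hq, hn⟩, m, hm, hdvd⟩ := ht
    simp only [mem_biUnion, mem_product, mem_filter, mem_range, mem_singleton]
    exact ⟨(m, q), ⟨hm, hq⟩, rfl, hn, hdvd⟩
  refine (card_le_card hsub).trans <| (card_biUnion_le_card_mul _ _ _ fun u _ => ?_).trans_eq
    (by simp : #(range k ×ˢ Ioc 0 X) * (Y / r + 1) = _)
  rw [card_product, card_singleton, one_mul]
  exact card_Ioc_filter_dvd_add_le hr _ Y

/-- The coprime pairs `(q, n)` with `0 < q ≤ X` and `0 < n ≤ Y` such that `r` divides the numerator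
`n + m * q` of none of the fractions `n / q + m` with `m < k`. -/
def coprimePairs (X Y k r : ℕ) : Finset (ℕ × ℕ) :=
  {t ∈ Ioc 0 X ×ˢ Ioc 0 Y | t.1.Coprime t.2 ∧ ∀ m < k, ¬ r ∣ t.2 + m * t.1}

theorem le_card_coprimePairs {r : ℕ} (hr : 0 < r) (X Y k : ℕ) :
    (X * Y / 4 - k * X * (Y / r + 1) : ℝ) ≤ #(coprimePairs X Y k r) := by
  have hsub : Ioc 0 X ×ˢ Ioc 0 Y ⊆ coprimePairs X Y k r ∪
      ({t ∈ Ioc 0 X ×ˢ Ioc 0 Y | ¬ t.1.Coprime t.2} ∪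
        {t ∈ Ioc 0 X ×ˢ Ioc 0 Y | ∃ m < k, r ∣ t.2 + m * t.1}) := by
    intro t ht
    simp only [coprimePairs, mem_union, mem_filter, ht, true_and, ← not_and, ← not_exists]
    tauto
  have hcard : (X * Y : ℝ) ≤ #(coprimePairs X Y k r) +
      (#{t ∈ Ioc 0 X ×ˢ Ioc 0 Y | ¬ t.1.Coprime t.2} +
        #{t ∈ Ioc 0 X ×ˢ Ioc 0 Y | ∃ m < k, r ∣ t.2 + m * t.1}) := by
    have := (card_le_card hsub).trans <| (card_union_le _ _).trans <|
      Nat.add_le_add_left (card_union_le _ _) _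
    simp only [card_product, Nat.card_Ioc, tsub_zero] at this
    exact_mod_cast this
  have hdvd : (#{t ∈ Ioc 0 X ×ˢ Ioc 0 Y | ∃ m < k, r ∣ t.2 + m * t.1} : ℝ) ≤
      k * X * (Y / r + 1) := calc
    _ ≤ (k * X * ((Y / r : ℕ) + 1) : ℝ) := by
      exact_mod_cast card_filter_exists_dvd_add_mul_le hr k X Y
    _ ≤ k * X * (Y / r + 1) := by
      gcongr
      exact Nat.cast_div_le
  linarith [card_filter_not_coprime_le X Y]

end CoprimePairs

section Characters

theorem exists_prime_mul_eq_card_sub_one_of_ne_one {F R : Type*} [Field F] [Fintype F]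
    [CommMonoidWithZero R] {χ : MulChar F R} (hχ : χ ≠ 1) :
    ∃ ℓ w : ℕ, ℓ.Prime ∧ w * ℓ = Fintype.card F - 1 ∧ ∀ u ≠ 0, χ u = 1 → u ^ w = 1 := by
  classical
  set K := χ.toUnitHom.ker
  have hindex : K.index ≠ 1 := by
    intro h
    refine hχ (MulChar.ext fun u => ?_)
    have hu : u ∈ K := Subgroup.index_eq_one.1 h ▸ Subgroup.mem_top u
    rw [← MulChar.coe_toUnitHom, MonoidHom.mem_ker.1 hu, MulChar.one_apply_coe, Units.val_one]
  refine ⟨K.index.minFac, Nat.card K * (K.index / K.index.minFac), Nat.minFac_prime hindex, ?_, ?_⟩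
  · rw [mul_assoc, Nat.div_mul_cancel (Nat.minFac_dvd _), K.card_mul_index,
      Nat.card_eq_fintype_card, Fintype.card_units]
  · intro u hu hχu
    lift u to Fˣ using hu.isUnit
    have hmem : u ∈ K := MonoidHom.mem_ker.2 (Units.ext (by simpa using hχu))
    have hpow : u ^ Nat.card K = 1 := orderOf_dvd_iff_pow_eq_one.1 (K.orderOf_dvd_natCard hmem)
    rw [← Units.val_pow_eq_pow_val, pow_mul, hpow, one_pow, Units.val_one]

theorem apply_natCast_eq_one_of_forall_prime_dvd {A B : Type*} [CommSemiring A]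
    [CommMonoidWithZero B] {χ : MulChar A B} {N : ℕ} (hN : N ≠ 0)
    (h : ∀ q : ℕ, q.Prime → q ∣ N → χ q = 1) : χ N = 1 := by
  rw [← Nat.prod_primeFactorsList hN, Nat.cast_list_prod, map_list_prod, List.map_map]
  refine List.prod_eq_one fun x hx => ?_
  obtain ⟨q, hq, rfl⟩ := List.mem_map.1 hx
  exact h q (Nat.prime_of_mem_primeFactorsList hq) (Nat.dvd_of_mem_primeFactorsList hq)

variable {p : ℕ} [Fact p.Prime]

theorem natCast_zmod_ne_zero_of_lt {n : ℕ} (hn : 0 < n) (hnp : n < p) : (n : ZMod p) ≠ 0 :=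
  (ZMod.natCast_eq_zero_iff n p).not.2 (Nat.not_dvd_of_pos_of_lt hn hnp)

theorem apply_natCast_eq_one_of_lt {R : Type*} [CommMonoidWithZero R] {χ : DirichletCharacter R p}
    {q₁ q₂ N : ℕ} (hmin : ∀ q : ℕ, q.Prime → χ q ∉ ({0, 1} : Set R) → q ≠ q₁ → q₂ ≤ q)
    (hN : 0 < N) (hNp : N < p) (hNq₂ : N < q₂) (hq₁ : ¬ q₁ ∣ N) : χ N = 1 := by
  nontriviality R
  refine apply_natCast_eq_one_of_forall_prime_dvd hN.ne' fun q hq hqN => ?_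
  have hle := Nat.le_of_dvd hN hqN
  by_contra hne
  refine (hle.trans_lt hNq₂).not_ge (hmin q hq ?_ ?_)
  · have hunit : IsUnit (χ q) :=
      (natCast_zmod_ne_zero_of_lt hq.pos (hle.trans_lt hNp)).isUnit.map χ
    simp [hne, hunit.ne_zero]
  · rintro rfl
    exact hq₁ hqN

end Characters

section Fractions

open Finset

variable {p : ℕ} [Fact p.Prime]

theorem injOn_natCast_div_natCast_zmod {X Y k r : ℕ} (hX : X < p) (hY : X * Y < p) :
    Set.InjOn (fun t : ℕ × ℕ => (t.2 / t.1 : ZMod p)) (coprimePairs X Y k r) := by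
  rintro ⟨q, n⟩ ht ⟨q', n'⟩ ht' h
  simp only [coprimePairs, mem_coe, mem_filter, mem_product, mem_Ioc] at ht ht' h
  obtain ⟨⟨hq, hn⟩, hqn, -⟩ := ht
  obtain ⟨⟨hq', hn'⟩, hqn', -⟩ := ht'
  rw [div_eq_div_iff (natCast_zmod_ne_zero_of_lt hq.1 (by omega))
    (natCast_zmod_ne_zero_of_lt hq'.1 (by omega))] at h
  have hcross : q' * n = q * n' := by
    have hmod : ((q' * n : ℕ) : ZMod p) = (q * n' : ℕ) := by push_cast; rw [mul_comm, h, mul_comm]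
    rw [ZMod.natCast_eq_natCast_iff'] at hmod
    rwa [Nat.mod_eq_of_lt, Nat.mod_eq_of_lt] at hmod
    · exact (Nat.mul_le_mul hq.2 hn'.2).trans_lt hY
    · exact (Nat.mul_le_mul hq'.2 hn.2).trans_lt hY
  obtain rfl : q = q' := Nat.dvd_antisymm (hqn.dvd_of_dvd_mul_right (Dvd.intro n' hcross.symm))
    (hqn'.dvd_of_dvd_mul_right (Dvd.intro n hcross))
  rw [Nat.eq_of_mul_eq_mul_left hq.1 hcross]

theorem ne_zero_and_pow_eq_pow_of_mem_coprimePairs {w X Y k r : ℕ} (hXY : Y + k * X ≤ p)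
    (hpow : ∀ N : ℕ, 0 < N → N < Y + k * X → ¬ r ∣ N → (N : ZMod p) ^ w = 1) {t : ℕ × ℕ}
    (ht : t ∈ coprimePairs X Y k r) {z : ZMod p} (hz : t.2 / t.1 = z) :
    (∀ m : Fin k, z - -((m : ℕ) : ZMod p) ≠ 0) ∧
      ∀ m m' : Fin k, (z - -((m : ℕ) : ZMod p)) ^ w = (z - -((m' : ℕ) : ZMod p)) ^ w := by
  obtain ⟨q, n⟩ := t
  simp only [coprimePairs, mem_filter, mem_product, mem_Ioc] at ht hz
  obtain ⟨⟨hq, hn⟩, -, hr⟩ := ht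
  have hlt (m : Fin k) : n + m * q < Y + k * X :=
    add_lt_add_of_le_of_lt hn.2 (Nat.mul_lt_mul_of_lt_of_le m.2 hq.2 (by omega))
  have hpos (m : Fin k) : 0 < n + m * q := by omega
  have hnum (m : Fin k) : ((n + m * q : ℕ) : ZMod p) ^ w = 1 := hpow _ (hpos m) (hlt m) (hr m m.2)
  rcases k.eq_zero_or_pos with rfl | hk
  · exact ⟨fun m => m.elim0, fun m => m.elim0⟩
  have hq0 : (q : ZMod p) ≠ 0 := natCast_zmod_ne_zero_of_lt hq.1 (by nlinarith)
  have hshift (m : Fin k) : z - -((m : ℕ) : ZMod p) = (n + m * q : ℕ) / q := by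
    rw [eq_div_iff hq0, ← hz]
    push_cast
    field_simp
    ring
  simp only [hshift, div_pow, hnum, implies_true, and_true]
  exact fun m => div_ne_zero (natCast_zmod_ne_zero_of_lt (hpos m) ((hlt m).trans_le hXY)) hq0

theorem card_coprimePairs_le {ℓ w X Y k r : ℕ} [Fact ℓ.Prime] (hwℓ : w * ℓ = p - 1) (hk : 13 ≤ k)
    (hpk : p ≤ 4 ^ (k - 1)) (hkp : 100 * k ≤ √p) (hY : X * Y < p) (hXY : Y + k * X ≤ p)
    (hpow : ∀ N : ℕ, 0 < N → N < Y + k * X → ¬ r ∣ N → (N : ZMod p) ^ w = 1) :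
    #(coprimePairs X Y k r) ≤ 5 * k * √p := by
  have hkp' : k ≤ p := by
    have hsqrt : √p ≤ p := Real.sqrt_le_iff.2 ⟨Nat.cast_nonneg p,
      le_self_pow₀ (Nat.one_le_cast.2 (Fact.out : p.Prime).one_le) two_ne_zero⟩
    exact_mod_cast (by linarith [(Nat.cast_nonneg k : (0 : ℝ) ≤ k)] : (k : ℝ) ≤ p)
  have hb : Function.Injective fun m : Fin k => -((m : ℕ) : ZMod p) := fun m m' h =>
    Fin.ext (CharP.natCast_injOn_Iio (ZMod p) p (m.2.trans_le hkp') (m'.2.trans_le hkp')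
      (neg_injective h))
  have hX : X < p := by nlinarith [(Fact.out : p.Prime).pos]
  rw [← card_image_of_injOn (injOn_natCast_div_natCast_zmod hX hY)]
  simpa only [Fintype.card_fin] using card_le_mul_sqrt_of_forall_sub_pow_eq hwℓ hb
    (by rwa [Fintype.card_fin]) (by rwa [Fintype.card_fin]) (by rwa [Fintype.card_fin])
    (forall_mem_image.2 fun t ht => ne_zero_and_pow_eq_pow_of_mem_coprimePairs hXY hpow ht rfl)

end Fractions

section Numerics

theorem le_log_of_ten_pow_seven_le {x : ℝ} (hx : 10 ^ 7 ≤ x) : 15.94 ≤ Real.log x := by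
  have h := Real.log_le_log (by norm_num) (by linarith : (2 : ℝ) ^ 23 ≤ x)
  rw [Real.log_pow] at h
  push_cast at h
  linarith [Real.log_two_gt_d9]

theorem mul_log_le_sqrt_of_ten_pow_seven_le {x : ℝ} (hx : 10 ^ 7 ≤ x) : 84.7 * Real.log x ≤ √x := by
  have hexp : Real.exp 2 ≤ 10 ^ 7 := by
    have := Real.exp_one_lt_d9
    rw [← Nat.cast_ofNat (R := ℝ) (n := 2), ← mul_one ((2 : ℕ) : ℝ), Real.exp_nat_mul]
    nlinarith [Real.exp_pos 1]
  have hlog : Real.log (10 ^ 7) ≤ 17 := by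
    have h := Real.log_le_log (by norm_num) (by norm_num : (10 ^ 7 : ℝ) ≤ 2 ^ 24)
    rw [Real.log_pow 2 24] at h
    push_cast at h
    linarith [Real.log_two_lt_d9]
  have hsqrt : 3000 ≤ √(10 ^ 7 : ℝ) := Real.le_sqrt_of_sq_le (by norm_num)
  have hx0 : 0 < √x := Real.sqrt_pos.2 (by linarith)
  have hanti : Real.log x / √x ≤ Real.log (10 ^ 7) / √(10 ^ 7) :=
    Real.log_div_sqrt_antitoneOn hexp (hexp.trans hx) hx
  rw [div_le_div_iff₀ hx0 (by linarith)] at hanti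
  nlinarith

theorem exists_le_four_pow_and_le_log {p : ℕ} (hp : 10 ^ 7 ≤ p) :
    ∃ k : ℕ, 13 ≤ k ∧ p ≤ 4 ^ (k - 1) ∧ k ≤ 0.847 * Real.log p := by
  have hle : p ≤ 4 ^ Nat.clog 4 p := Nat.le_pow_clog (by norm_num) p
  have hs : 12 ≤ Nat.clog 4 p := (Nat.lt_clog_iff_pow_lt (by norm_num)).2 (by omega)
  refine ⟨Nat.clog 4 p + 1, by omega, hle, ?_⟩
  have hpred : 4 ^ (Nat.clog 4 p - 1) < p := Nat.pow_pred_clog_lt_self (by norm_num) (by omega)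
  have hlog := Real.log_le_log (by positivity)
    (show ((4 : ℝ) ^ (Nat.clog 4 p - 1)) ≤ p by exact_mod_cast hpred.le)
  have hlog4 : Real.log 4 = 2 * Real.log 2 := by
    rw [show (4 : ℝ) = 2 ^ 2 by norm_num, Real.log_pow, Nat.cast_ofNat]
  have hs' : (12 : ℝ) ≤ Nat.clog 4 p := by exact_mod_cast hs
  rw [Real.log_pow, Nat.cast_sub (by omega), Nat.cast_one, hlog4] at hlog
  have : (Nat.clog 4 p - 1 : ℝ) * 1.38629 ≤ Real.log p := hlog.trans' <| by
    gcongr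
    · linarith
    · linarith [Real.log_two_gt_d9]
  push_cast
  linarith [le_log_of_ten_pow_seven_le (x := p) (by exact_mod_cast hp)]

theorem sqrt_eq_rpow_one_fourth_sq {x : ℝ} (hx : 0 ≤ x) : √x = (x ^ (1 / 4 : ℝ)) ^ 2 := by
  rw [Real.sqrt_eq_rpow, ← Real.rpow_natCast, ← Real.rpow_mul hx]
  norm_num

theorem exists_nat_le_mul_rpow_and_mul_sqrt_le_sq {x : ℝ} (hx : 10 ^ 7 ≤ x) :
    ∃ X : ℕ, 360 ≤ X ∧ X ≤ 6.5 * x ^ (1 / 4 : ℝ) ∧ 41.9 * √x ≤ X ^ 2 := by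
  have hx0 : 0 ≤ x := by linarith
  have hroot : 56 ≤ x ^ (1 / 4 : ℝ) := by
    rw [one_div, Real.le_rpow_inv_iff_of_pos (by norm_num) hx0 (by norm_num)]
    norm_num
    linarith
  have hfloor := Nat.floor_le (by positivity : 0 ≤ 6.5 * x ^ (1 / 4 : ℝ))
  have hlt := Nat.lt_floor_add_one (6.5 * x ^ (1 / 4 : ℝ))
  refine ⟨⌊6.5 * x ^ (1 / 4 : ℝ)⌋₊, Nat.le_floor ?_, hfloor, ?_⟩
  · push_cast
    linarith
  · rw [sqrt_eq_rpow_one_fourth_sq hx0]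
    nlinarith

theorem exists_parameters {p : ℕ} (hp : 10 ^ 7 ≤ p) :
    ∃ k X : ℕ, 13 ≤ k ∧ p ≤ 4 ^ (k - 1) ∧ 100 * k ≤ √p ∧ k ≤ 0.115 * (Real.exp 2 * Real.log p) ∧
      360 ≤ X ∧ 41.9 * √p ≤ X ^ 2 ∧ X * (k * X) < p ∧
      k * X + k * X ≤ 11.0421 * (p : ℝ) ^ (1 / 4 : ℝ) * Real.log p := by
  have hp' : (10 : ℝ) ^ 7 ≤ p := by exact_mod_cast hp
  obtain ⟨k, hk, hpk, hkL⟩ := exists_le_four_pow_and_le_log hp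
  obtain ⟨X, hX, hXP, hXR⟩ := exists_nat_le_mul_rpow_and_mul_sqrt_le_sq hp'
  have hlogp := mul_log_le_sqrt_of_ten_pow_seven_le hp'
  have hlog : 15.94 ≤ Real.log p := le_log_of_ten_pow_seven_le hp'
  have hexp : 7.38 * Real.log p ≤ Real.exp 2 * Real.log p := by
    have h1 := Real.exp_one_gt_d9
    rw [← one_add_one_eq_two, Real.exp_add]
    gcongr
    nlinarith
  refine ⟨k, X, hk, hpk, by linarith, by linarith, hX, hXR, ?_, ?_⟩
  · have : (X * (k * X) : ℝ) < p := calc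
      (X * (k * X) : ℝ) = k * X ^ 2 := by ring
      _ ≤ √p / 100 * (6.5 * (p : ℝ) ^ (1 / 4 : ℝ)) ^ 2 := by
        gcongr
        linarith
      _ = 0.4225 * (√p * √p) := by
        rw [mul_pow, ← sqrt_eq_rpow_one_fourth_sq (Nat.cast_nonneg p)]
        ring
      _ < p := by
        rw [Real.mul_self_sqrt (Nat.cast_nonneg p)]
        linarith
    exact_mod_cast this
  · calc (k * X + k * X : ℝ) = 2 * (k * X) := by ring
      _ ≤ 2 * (0.847 * Real.log p * (6.5 * (p : ℝ) ^ (1 / 4 : ℝ))) := by gcongr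
      _ = 11.011 * ((p : ℝ) ^ (1 / 4 : ℝ) * Real.log p) := by ring
      _ ≤ 11.0421 * ((p : ℝ) ^ (1 / 4 : ℝ) * Real.log p) := by gcongr; norm_num
      _ = 11.0421 * (p : ℝ) ^ (1 / 4 : ℝ) * Real.log p := by ring

theorem mul_lt_of_mul_le_sq {k r X R : ℝ} (hk : 0 < k) (hr : 0 < r) (hkr : k ≤ 0.115 * r)
    (hX : 360 ≤ X) (hXR : 41.9 * R ≤ X ^ 2) :
    5 * k * R < X * (k * X) / 4 - k * X * (k * X / r + 1) := by
  have hkr' : k / r ≤ 0.115 := (div_le_iff₀ hr).2 hkr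
  have : k * (5 * R) < k * (X ^ 2 * (1 / 4 - k / r) - X) := by
    gcongr
    nlinarith
  calc 5 * k * R = k * (5 * R) := by ring
    _ < k * (X ^ 2 * (1 / 4 - k / r) - X) := this
    _ = X * (k * X) / 4 - k * X * (k * X / r + 1) := by ring

end Numerics

theorem q2_bound_when_q1_large_general {R : Type*} [CommMonoidWithZero R] {p : ℕ} [Fact p.Prime]
    (hp : 10 ^ 7 ≤ p) {χ : DirichletCharacter R p} (hχ : χ ≠ 1) {q₁ q₂ : ℕ}
    (hmin₂ : ∀ q : ℕ, q.Prime → χ q ∉ ({0, 1} : Set R) → q ≠ q₁ → q₂ ≤ q)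
    (hbig : Real.exp 2 * Real.log p < q₁) :
    (q₂ : ℝ) < 11.0421 * (p : ℝ) ^ (1 / 4 : ℝ) * Real.log p := by
  by_contra! hq₂
  obtain ⟨k, X, hk, hpk, hkp, hkL, hX, hXp, hXX, hkX⟩ := exists_parameters hp
  obtain ⟨ℓ, w, hℓ, hwℓ, hker⟩ := exists_prime_mul_eq_card_sub_one_of_ne_one hχ
  have := Fact.mk hℓ
  have hkXq₂ : k * X + k * X ≤ q₂ := by exact_mod_cast hkX.trans hq₂
  have hkXp : k * X + k * X ≤ p := by nlinarith
  have hpow (N : ℕ) (hN : 0 < N) (hlt : N < k * X + k * X) (hdvd : ¬ q₁ ∣ N) :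
      (N : ZMod p) ^ w = 1 :=
    hker N (natCast_zmod_ne_zero_of_lt hN (by omega))
      (apply_natCast_eq_one_of_lt hmin₂ hN (by omega) (by omega) hdvd)
  have hk0 : (0 : ℝ) < k := by exact_mod_cast (by omega : 0 < k)
  have hq₁ : (0 : ℝ) < q₁ := by linarith
  have hupper := card_coprimePairs_le (by rwa [ZMod.card] at hwℓ) hk hpk hkp hXX hkXp hpow
  have hlower := le_card_coprimePairs (Nat.cast_pos.1 hq₁) X (k * X) k
  have hgap := mul_lt_of_mul_le_sq hk0 hq₁ (by linarith) (by exact_mod_cast hX) hXp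
  push_cast at hlower
  exact (hgap.trans_le (hlower.trans hupper)).false

theorem q2_bound_when_q1_large (p : ℕ) [Fact p.Prime] (hp : (10:ℕ)^7 ≤ p)
    (χ : DirichletCharacter ℂ p) (hχ : χ ≠ 1)
    (q₁ q₂ : ℕ) (hq₁ : q₁.Prime) (hq₂ : q₂.Prime) (hlt : q₁ < q₂)
    (hnr₁ : χ (q₁ : ZMod p) ∉ ({0, 1} : Set ℂ))
    (hnr₂ : χ (q₂ : ZMod p) ∉ ({0, 1} : Set ℂ))
    (hmin₁ : ∀ q : ℕ, q.Prime → χ (q : ZMod p) ∉ ({0, 1} : Set ℂ) → q₁ ≤ q)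
    (hmin₂ : ∀ q : ℕ, q.Prime → χ (q : ZMod p) ∉ ({0, 1} : Set ℂ) → q ≠ q₁ → q₂ ≤ q)
    (hbig : Real.exp 2 * Real.log p < q₁) :
    (q₂ : ℝ) < 11.0421 * (p : ℝ) ^ ((1:ℝ)/4) * Real.log p :=
  q2_bound_when_q1_large_general hp hχ hmin₂ hbig
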